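/- arXiv:1310.0800 — 4 statements merged into one kernel-verified Lean document; each statement's English description precedes it below -/
import Mathlib

section
/- For every fixed real u with 0 < u ≤ 1, the upper-bound expression from the density estimate at the edge satisfies lim_{N→∞} (1/π) · e^{-(√N+u)²} · ((√N+u)^{2N}/N!) · N/((√N+u)²−N) = e^{-2u²} / (2√2 · u · π^{3/2}). -/
open scoped Real Topology

lemma edge_aux_exp (u : ℝ) (hu0 : 0 < u) :
    Filter.Tendsto (fun s : ℝ => -2 * u * s - u ^ 2 + 2 * s ^ 2 * Real.log (1 + u / s))
      Filter.atTop (𝓝 (-2 * u ^ 2)) := by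
  rw [tendsto_iff_norm_sub_tendsto_zero]
  have h0 : Filter.Tendsto (fun s : ℝ => 2 * u ^ 3 / (s + -u)) Filter.atTop (𝓝 0) :=
    Filter.Tendsto.const_div_atTop
      (Filter.tendsto_atTop_add_const_right _ _ Filter.tendsto_id) _
  refine squeeze_zero' (Filter.Eventually.of_forall fun s => norm_nonneg _) ?_ h0
  filter_upwards [Filter.eventually_gt_atTop u] with s hs
  have hs0 : 0 < s := hu0.trans hs
  have hlt : u / s < 1 := (div_lt_one hs0).2 hs
  have hpos : 0 < u / s := div_pos hu0 hs0
  have habs : |-(u / s)| = u / s := by rw [abs_neg, abs_of_pos hpos]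
  have h := Real.abs_log_sub_add_sum_range_le (x := -(u / s)) (by rw [habs]; exact hlt) 2
  rw [habs] at h
  simp only [Finset.sum_range_succ, Finset.sum_range_zero] at h
  have e1 : -2 * u * s - u ^ 2 + 2 * s ^ 2 * Real.log (1 + u / s) - -2 * u ^ 2
      = 2 * s ^ 2 * (-(u / s) + (u / s) ^ 2 / 2 + Real.log (1 + u / s)) := by
    field_simp
    ring
  have hsu : 0 < s - u := sub_pos.2 hs
  have e2 : 2 * u ^ 3 / (s + -u) = 2 * s ^ 2 * ((u / s) ^ 3 / (1 - u / s)) := by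
    have : s + -u ≠ 0 := by rw [← sub_eq_add_neg]; exact hsu.ne'
    have : s - u ≠ 0 := hsu.ne'
    have h3 : 1 - u / s ≠ 0 := by linarith
    rw [← sub_eq_add_neg, show 1 - u / s = (s - u) / s by field_simp]
    field_simp
  rw [e1, e2, Real.norm_eq_abs, abs_mul, abs_of_pos (by positivity : 0 < 2 * s ^ 2)]
  refine mul_le_mul_of_nonneg_left ?_ (by positivity)
  have e3 : -(u / s) + (u / s) ^ 2 / 2 + Real.log (1 + u / s) =
      0 + (-(u / s)) ^ (0 + 1) / (((0 : ℕ) : ℝ) + 1) + (-(u / s)) ^ (1 + 1) / (((1 : ℕ) : ℝ) + 1)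
        + Real.log (1 - -(u / s)) := by
    rw [sub_neg_eq_add]
    push_cast
    ring
  rw [e3]
  exact h

/-- Limit of the upper edge bound `(1/π) e^{-(√N+u)²} ((√N+u)^{2N}/N!) · N/((√N+u)²−N)`
as `N → ∞`. -/
theorem edge_upper_bound_limit (u : ℝ) (hu0 : 0 < u) (hu1 : u ≤ 1) :
    Filter.Tendsto
      (fun N : ℕ =>
        (1 / Real.pi) * Real.exp (-(Real.sqrt N + u) ^ 2) *
          ((Real.sqrt N + u) ^ (2 * N) / N.factorial) *
          (N / ((Real.sqrt N + u) ^ 2 - N)))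
      Filter.atTop
      (𝓝 (Real.exp (-2 * u ^ 2) / (2 * Real.sqrt 2 * u * Real.pi ^ ((3 : ℝ) / 2)))) := by
  have hs : Filter.Tendsto (fun N : ℕ => Real.sqrt N) Filter.atTop Filter.atTop :=
    Real.tendsto_sqrt_atTop.comp tendsto_natCast_atTop_atTop
  have hA := (Real.continuous_exp.tendsto _).comp ((edge_aux_exp u hu0).comp hs)
  have hB := Stirling.tendsto_stirlingSeq_sqrt_pi.inv₀ (Real.sqrt_pos.2 Real.pi_pos).ne'
  have hC0 : Filter.Tendsto (fun N : ℕ => Real.sqrt 2 * (2 * u + u ^ 2 / Real.sqrt N))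
      Filter.atTop (𝓝 (Real.sqrt 2 * (2 * u + 0))) :=
    ((hs.const_div_atTop (u ^ 2)).const_add (2 * u)).const_mul _
  have hC := hC0.inv₀ (by positivity)
  have hpi : Real.pi ^ ((3 : ℝ) / 2) = Real.pi * Real.sqrt Real.pi := by
    rw [show (3 : ℝ) / 2 = 1 + 1 / 2 by norm_num, Real.rpow_add Real.pi_pos, Real.rpow_one,
      Real.sqrt_eq_rpow]
  have key := ((hA.const_mul (1 / Real.pi)).mul hB).mul hC
  have hval : 1 / Real.pi * Real.exp (-2 * u ^ 2) * (Real.sqrt Real.pi)⁻¹ *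
      (Real.sqrt 2 * (2 * u + 0))⁻¹ =
      Real.exp (-2 * u ^ 2) / (2 * Real.sqrt 2 * u * Real.pi ^ ((3 : ℝ) / 2)) := by
    rw [hpi, add_zero]
    have := Real.pi_pos
    field_simp
  rw [hval] at key
  refine key.congr' ?_
  filter_upwards [Filter.eventually_gt_atTop 0] with N hN
  have hNr : (0 : ℝ) < N := by exact_mod_cast hN
  simp only [Function.comp, Stirling.stirlingSeq]
  obtain ⟨s, hsdef⟩ : ∃ s, s = Real.sqrt (N : ℝ) := ⟨_, rfl⟩
  have hs0 : 0 < s := hsdef ▸ Real.sqrt_pos.2 hNr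
  have hsq : (N : ℝ) = s ^ 2 := by rw [hsdef, Real.sq_sqrt hNr.le]
  have h2N : Real.sqrt (2 * (N : ℝ)) = Real.sqrt 2 * s := by
    rw [hsdef, Real.sqrt_mul (by norm_num)]
  have hpos : 0 < 1 + u / s := by positivity
  have hE : Real.exp (-2 * u * s - u ^ 2 + 2 * s ^ 2 * Real.log (1 + u / s))
      = Real.exp (-(s + u) ^ 2) * Real.exp 1 ^ N * (1 + u / s) ^ (2 * N) := by
    rw [← Real.exp_nat_mul, ← Real.exp_log (pow_pos hpos (2 * N)), Real.log_pow, ← Real.exp_add,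
      ← Real.exp_add]
    congr 1
    push_cast
    rw [hsq]
    ring
  have hF : (s + u) ^ (2 * N) = (1 + u / s) ^ (2 * N) * (N : ℝ) ^ N := by
    rw [hsq, ← pow_mul, ← mul_pow]
    congr 1
    field_simp
  have hfac : (N.factorial : ℝ) ≠ 0 := by exact_mod_cast N.factorial_ne_zero
  have h2 : Real.sqrt 2 * Real.sqrt 2 = 2 := Real.mul_self_sqrt (by norm_num)
  rw [h2N, ← hsdef, hE, hF, div_pow]
  have hG : (N : ℝ) / ((s + u) ^ 2 - N) = s / (2 * u + u ^ 2 / s) := by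
    rw [hsq, show (s + u) ^ 2 - s ^ 2 = s * (2 * u + u ^ 2 / s) by field_simp; ring]
    field_simp
  rw [hG]
  have hH : 0 < 2 * u + u ^ 2 / s := by positivity
  generalize 2 * u + u ^ 2 / s = H at *
  generalize (1 + u / s) ^ (2 * N) = P at *
  have hNN : (0:ℝ) < (N : ℝ) ^ N := by positivity
  have hee : 0 < Real.exp 1 ^ N := by positivity
  generalize (N : ℝ) ^ N = Q at *
  generalize Real.exp 1 ^ N = R at *
  have := Real.pi_pos
  have : 0 < Real.sqrt 2 := by positivity
  field_simp
end

section
/- For every fixed real u with 0 < u ≤ 1, the lower-bound expression from the density estimate at the edge satisfies lim_{N→∞} (1/π) · e^{-(√N−u)²} · ((√N−u)^{2N}/N!) · (N+1)/(N+1−(√N−u)²) = e^{-2u²} / (2√2 · u · π^{3/2}). -/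
open scoped Real Topology

lemma edge_x_tendsto : Filter.Tendsto (fun N : ℕ => (Real.sqrt N)⁻¹) Filter.atTop (𝓝 0) :=
  Filter.Tendsto.inv_tendsto_atTop
    (Real.tendsto_sqrt_atTop.comp tendsto_natCast_atTop_atTop)

lemma edge_exp_tendsto (u : ℝ) (hu0 : 0 < u) :
    Filter.Tendsto (fun N : ℕ => 2 * u * Real.sqrt N - u ^ 2
      + 2 * N * Real.log (1 - u * (Real.sqrt N)⁻¹)) Filter.atTop (𝓝 (-2 * u ^ 2)) := by
  have hy : Filter.Tendsto (fun N : ℕ => u * (Real.sqrt N)⁻¹) Filter.atTop (𝓝 0) := by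
    simpa using edge_x_tendsto.const_mul u
  have hb : Filter.Tendsto (fun N : ℕ => 2 * u ^ 2 * (u * (Real.sqrt N)⁻¹)
      / (1 - u * (Real.sqrt N)⁻¹)) Filter.atTop (𝓝 0) := by
    have := (hy.const_mul (2 * u ^ 2)).div (hy.const_sub 1) (by norm_num)
    rw [mul_zero, zero_div] at this
    exact this
  rw [tendsto_iff_norm_sub_tendsto_zero]
  refine squeeze_zero' (Filter.Eventually.of_forall fun _ => norm_nonneg _) ?_ hb
  filter_upwards [hy.eventually (gt_mem_nhds (show (0 : ℝ) < 1 by norm_num)),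
    Filter.eventually_gt_atTop 0] with N h1 hN
  have hNr : (0 : ℝ) < N := by exact_mod_cast hN
  have hs : 0 < Real.sqrt N := Real.sqrt_pos.2 hNr
  have hsq : (N : ℝ) = Real.sqrt N ^ 2 := (Real.sq_sqrt hNr.le).symm
  generalize Real.sqrt N = s at *
  have hy0 : 0 < u * s⁻¹ := by positivity
  have key := Real.abs_log_sub_add_sum_range_le (x := u * s⁻¹) (by rwa [abs_of_pos hy0]) 2
  rw [abs_of_pos hy0] at key
  simp only [Finset.sum_range_succ, Finset.sum_range_zero] at key
  rw [hsq, Real.norm_eq_abs]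
  have e1 : 2 * u * s - u ^ 2 + 2 * s ^ 2 * Real.log (1 - u * s⁻¹) - -2 * u ^ 2
    = 2 * s ^ 2 * ((0 + (u * s⁻¹) ^ (0 + 1) / ((0 : ℕ) + 1) + (u * s⁻¹) ^ (1 + 1) / ((1 : ℕ) + 1))
      + Real.log (1 - u * s⁻¹)) := by
    push_cast
    field_simp
    ring
  rw [e1, abs_mul, abs_of_pos (by positivity : 0 < 2 * s ^ 2)]
  refine (mul_le_mul_of_nonneg_left key (by positivity)).trans (le_of_eq ?_)
  rw [← mul_div_assoc]
  congr 1
  norm_num only [mul_pow, inv_pow]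
  field_simp

theorem edge_aux (u : ℝ) (hu0 : 0 < u) (hu1 : u ≤ 1) : Filter.Tendsto (fun N : ℕ =>
    (1 / Real.pi) * Real.exp (2 * u * Real.sqrt N - u ^ 2
      + 2 * N * Real.log (1 - u * (Real.sqrt N)⁻¹)) * (Stirling.stirlingSeq N)⁻¹ * (Real.sqrt 2)⁻¹
      * ((1 + (Real.sqrt N)⁻¹ ^ 2) / ((Real.sqrt N)⁻¹ + 2 * u - u ^ 2 * (Real.sqrt N)⁻¹)))
    Filter.atTop (𝓝 ((1 / Real.pi) * Real.exp (-2 * u ^ 2) * (Real.sqrt Real.pi)⁻¹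
      * (Real.sqrt 2)⁻¹ * ((1 + 0 ^ 2) / (0 + 2 * u - u ^ 2 * 0)))) := by
  have hx := edge_x_tendsto
  refine ((((Real.continuous_exp.tendsto _).comp (edge_exp_tendsto u hu0)).const_mul _ |>.mul
    (Stirling.tendsto_stirlingSeq_sqrt_pi.inv₀ (by positivity))).mul_const _).mul
    (((hx.pow 2).const_add 1).div ((hx.add_const _).sub (hx.const_mul _)) ?_)
  simp [hu0.ne']

/-- Limit of the lower edge bound `(1/π) e^{-(√N−u)²} ((√N−u)^{2N}/N!) · (N+1)/(N+1−(√N−u)²)`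
as `N → ∞`. -/
theorem edge_lower_bound_limit (u : ℝ) (hu0 : 0 < u) (hu1 : u ≤ 1) :
    Filter.Tendsto
      (fun N : ℕ =>
        (1 / Real.pi) * Real.exp (-(Real.sqrt N - u) ^ 2) *
          ((Real.sqrt N - u) ^ (2 * N) / N.factorial) *
          ((N + 1) / (N + 1 - (Real.sqrt N - u) ^ 2)))
      Filter.atTop
      (𝓝 (Real.exp (-2 * u ^ 2) / (2 * Real.sqrt 2 * u * Real.pi ^ ((3 : ℝ) / 2)))) := by
  have h := edge_aux u hu0 hu1
  have hlim : (1 / Real.pi) * Real.exp (-2 * u ^ 2) * (Real.sqrt Real.pi)⁻¹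
      * (Real.sqrt 2)⁻¹ * ((1 + 0 ^ 2) / (0 + 2 * u - u ^ 2 * 0))
      = Real.exp (-2 * u ^ 2) / (2 * Real.sqrt 2 * u * Real.pi ^ ((3 : ℝ) / 2)) := by
    have : Real.pi ^ ((3 : ℝ) / 2) = Real.pi * Real.sqrt Real.pi := by
      rw [show (3 : ℝ) / 2 = 1 + 1 / 2 by norm_num, Real.rpow_add Real.pi_pos, Real.rpow_one,
        Real.sqrt_eq_rpow]
    rw [this]
    have : Real.sqrt Real.pi ≠ 0 := by positivity
    simp only [mul_zero, sub_zero, zero_add]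
    field_simp
    norm_num
  rw [hlim] at h
  refine h.congr' ?_
  have hy : Filter.Tendsto (fun N : ℕ => u * (Real.sqrt N)⁻¹) Filter.atTop (𝓝 0) := by
    simpa using edge_x_tendsto.const_mul u
  filter_upwards [hy.eventually (gt_mem_nhds (show (0 : ℝ) < 1 by norm_num)),
    Filter.eventually_gt_atTop 0] with N h1 hN
  have hNr : (0 : ℝ) < N := by exact_mod_cast hN
  have hs : 0 < Real.sqrt N := Real.sqrt_pos.2 hNr
  have hsq : Real.sqrt N ^ 2 = (N : ℝ) := Real.sq_sqrt hNr.le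
  have hst : (Stirling.stirlingSeq N)⁻¹ =
      Real.sqrt 2 * Real.sqrt N * (N ^ N * Real.exp (-N)) / N.factorial := by
    rw [Stirling.stirlingSeq, inv_div, Real.sqrt_mul (by norm_num), div_pow, ← Real.exp_nat_mul,
      Real.exp_neg, mul_one, div_eq_mul_inv ((N : ℝ) ^ N)]
  have hpow : (Real.sqrt N - u) ^ (2 * N)
      = N ^ N * Real.exp (2 * N * Real.log (1 - u * (Real.sqrt N)⁻¹)) := by
    have e : Real.sqrt N - u = Real.sqrt N * (1 - u * (Real.sqrt N)⁻¹) := by field_simp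
    rw [e, mul_pow, pow_mul, hsq]
    congr 1
    rw [show (2 * (N : ℝ)) = ((2 * N : ℕ) : ℝ) by push_cast; ring, Real.exp_nat_mul,
      Real.exp_log (by linarith)]
  have hexp : Real.exp (-(Real.sqrt N - u) ^ 2)
      = Real.exp (-N) * Real.exp (2 * u * Real.sqrt N - u ^ 2) := by
    rw [← Real.exp_add]; congr 1; rw [← hsq, Real.sqrt_sq hs.le]; ring
  have hfrac : ((N : ℝ) + 1) / (N + 1 - (Real.sqrt N - u) ^ 2) = Real.sqrt N *
      ((1 + (Real.sqrt N)⁻¹ ^ 2) / ((Real.sqrt N)⁻¹ + 2 * u - u ^ 2 * (Real.sqrt N)⁻¹)) := by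
    rw [show (N : ℝ) + 1 - (Real.sqrt N - u) ^ 2
      = Real.sqrt N * ((Real.sqrt N)⁻¹ + 2 * u - u ^ 2 * (Real.sqrt N)⁻¹) by
        rw [← hsq, Real.sqrt_sq hs.le]; field_simp; ring,
      show (N : ℝ) + 1 = Real.sqrt N * (Real.sqrt N * (1 + (Real.sqrt N)⁻¹ ^ 2)) by
        nth_rw 1 [← hsq]; field_simp,
      mul_div_mul_left _ _ hs.ne', mul_div_assoc]
  rw [hst, hpow, hexp, hfrac, Real.exp_add]
  have h2 : Real.sqrt 2 * (Real.sqrt 2)⁻¹ = 1 := mul_inv_cancel₀ (by positivity)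
  generalize (1 + (Real.sqrt N)⁻¹ ^ 2) / ((Real.sqrt N)⁻¹ + 2 * u - u ^ 2 * (Real.sqrt N)⁻¹) = F
  generalize Real.exp (2 * N * Real.log (1 - u * (Real.sqrt N)⁻¹)) = E
  generalize Real.exp (2 * u * Real.sqrt N - u ^ 2) = G
  linear_combination (1 / Real.pi * (G * E) * (Real.sqrt N * (N ^ N * Real.exp (-N)) / N.factorial)
    * F) * h2
end

section
/- The central value of the lower incomplete gamma function satisfies lim_{n→∞} γ(n+1, n+1)/n! = 1/2. -/
open scoped Real Topology

/-- The lower incomplete gamma function `γ(n+1, a) = ∫_0^a t^n e^{-t} dt`. -/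
noncomputable def lowerIncGamma (n : ℕ) (a : ℝ) : ℝ :=
  ∫ t in (0:ℝ)..a, t ^ n * Real.exp (-t)

lemma aux_log_le (x : ℝ) (h0 : 0 ≤ x) (h1 : x < 1) :
    Real.log (1 - x) ≤ -x - x ^ 2 / 2 := by
  have h := Real.hasSum_pow_div_log_of_abs_lt_one (x := x) (by rwa [abs_of_nonneg h0])
  have h2 := sum_le_hasSum (Finset.range 2) (fun i _ => by positivity) h
  norm_num [Finset.sum_range_succ] at h2
  linarith

lemma aux_log_abs (x : ℝ) (h0 : 0 ≤ x) (h1 : x ≤ 1 / 2) :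
    |x + x ^ 2 / 2 + Real.log (1 - x)| ≤ 2 * x ^ 3 := by
  have h := Real.abs_log_sub_add_sum_range_le (x := x) (by rw [abs_of_nonneg h0]; linarith) 2
  norm_num [Finset.sum_range_succ, abs_of_nonneg h0] at h
  refine h.trans ?_
  rw [div_le_iff₀ (by linarith)]
  nlinarith [pow_nonneg h0 3]

/-- The rescaled integrand. -/
noncomputable def auxF (n : ℕ) (u : ℝ) : ℝ :=
  (1 - u / √n) ^ n * Real.exp (√n * u)

lemma auxF_eq (n : ℕ) (hn : 0 < n) (u : ℝ) (h1 : u < √n) :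
    auxF n u = Real.exp (n * (Real.log (1 - u / √n) + u / √n)) := by
  have hs : 0 < √(n:ℝ) := by positivity
  have hx : 0 < 1 - u / √n := by
    have : u / √n < 1 := by rw [div_lt_one hs]; exact h1
    linarith
  have h2 : (n:ℝ) * (u / √n) = √n * u := by
    have := Real.mul_self_sqrt (Nat.cast_nonneg (α := ℝ) n)
    field_simp
    rw [sq, this, mul_comm]
  rw [auxF, mul_add, Real.exp_add, h2, Real.exp_nat_mul, Real.exp_log hx]

lemma auxF_bound (n : ℕ) (u : ℝ) (h0 : 0 < u) (h1 : u ≤ √n) :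
    |auxF n u| ≤ Real.exp (-(1 / 2) * u ^ 2) := by
  have hs : 0 < √(n:ℝ) := h0.trans_le h1
  have hn : 0 < n := by
    have := Real.sqrt_pos.1 hs
    exact_mod_cast this
  have hsq := Real.sq_sqrt (Nat.cast_nonneg (α := ℝ) n)
  rcases h1.lt_or_eq with h | h
  · rw [auxF_eq n hn u h, abs_of_pos (Real.exp_pos _), Real.exp_le_exp]
    have hl := aux_log_le (u / √n) (by positivity) (by rw [div_lt_one hs]; exact h)
    have h3 : (n:ℝ) * (u / √n) ^ 2 = u ^ 2 := by
      rw [div_pow, hsq]; field_simp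
    have h4 : (n:ℝ) * (Real.log (1 - u / √n) + u / √n) ≤ n * (- (u / √n) ^ 2 / 2) :=
      mul_le_mul_of_nonneg_left (by linarith) (by positivity)
    linarith
  · rw [auxF, h, div_self hs.ne', sub_self, zero_pow hn.ne', zero_mul, abs_zero]
    positivity

lemma tendsto_sqrt_nat : Filter.Tendsto (fun n : ℕ => √(n:ℝ)) Filter.atTop Filter.atTop :=
  Real.tendsto_sqrt_atTop.comp tendsto_natCast_atTop_atTop

lemma auxF_tendsto (u : ℝ) (h0 : 0 < u) :
    Filter.Tendsto (fun n : ℕ => auxF n u) Filter.atTop (𝓝 (Real.exp (-(1 / 2) * u ^ 2))) := by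
  have key : Filter.Tendsto (fun n : ℕ => (n:ℝ) * (Real.log (1 - u / √n) + u / √n))
      Filter.atTop (𝓝 (-(1 / 2) * u ^ 2)) := by
    rw [tendsto_iff_dist_tendsto_zero]
    have hlim : Filter.Tendsto (fun n : ℕ => 2 * u ^ 3 / √(n:ℝ)) Filter.atTop (𝓝 0) :=
      tendsto_sqrt_nat.const_div_atTop _
    refine squeeze_zero' (Filter.Eventually.of_forall fun _ => dist_nonneg) ?_ hlim
    filter_upwards [tendsto_sqrt_nat.eventually_ge_atTop (2 * u)] with n hn
    have hs : 0 < √(n:ℝ) := by linarith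
    have hsq := Real.sq_sqrt (Nat.cast_nonneg (α := ℝ) n)
    have ha := aux_log_abs (u / √n) (by positivity) (by rw [div_le_iff₀ hs]; linarith)
    have h3 : (n:ℝ) * (u / √n) ^ 2 = u ^ 2 := by
      rw [div_pow]; nth_rewrite 1 [← hsq]; field_simp
    have h4 : (n:ℝ) * (u / √n) ^ 3 = u ^ 3 / √n := by
      rw [div_pow]; nth_rewrite 1 [← hsq]; field_simp
    rw [Real.dist_eq]
    have h5 : (n:ℝ) * (Real.log (1 - u / √n) + u / √n) - -(1 / 2) * u ^ 2
        = n * (u / √n + (u / √n) ^ 2 / 2 + Real.log (1 - u / √n)) := by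
      rw [← h3]; ring
    rw [h5, abs_mul, abs_of_nonneg (Nat.cast_nonneg (α := ℝ) n)]
    calc _ ≤ (n:ℝ) * (2 * (u / √n) ^ 3) := mul_le_mul_of_nonneg_left ha (by positivity)
      _ = 2 * u ^ 3 / √n := by rw [mul_left_comm, h4]; ring
  refine ((Real.continuous_exp.tendsto _).comp key).congr' ?_
  filter_upwards [tendsto_sqrt_nat.eventually_gt_atTop u, Filter.eventually_gt_atTop 0]
    with n hn hn0
  exact (auxF_eq n hn0 u hn).symm

lemma auxF_continuous (n : ℕ) : Continuous (auxF n) := by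
  unfold auxF
  fun_prop

lemma auxF_integral_tendsto :
    Filter.Tendsto (fun n : ℕ => ∫ u in (0:ℝ)..√n, auxF n u) Filter.atTop
      (𝓝 (√(π / (1 / 2)) / 2)) := by
  rw [← integral_gaussian_Ioi]
  have h : ∀ n : ℕ, ∫ u in (0:ℝ)..√n, auxF n u
      = ∫ u in Set.Ioi (0:ℝ), (Set.Iic √(n:ℝ)).indicator (auxF n) u := by
    intro n
    rw [intervalIntegral.integral_of_le (Real.sqrt_nonneg _),
      MeasureTheory.setIntegral_indicator measurableSet_Iic, Set.Ioi_inter_Iic]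
  simp_rw [h]
  refine MeasureTheory.tendsto_integral_of_dominated_convergence
    (fun u => Real.exp (-(1 / 2) * u ^ 2)) ?_ ?_ ?_ ?_
  · intro n
    exact ((auxF_continuous n).measurable.indicator measurableSet_Iic).aestronglyMeasurable
  · exact (integrable_exp_neg_mul_sq (by norm_num)).integrableOn
  · intro n
    filter_upwards [MeasureTheory.ae_restrict_mem measurableSet_Ioi] with u hu
    by_cases hm : u ∈ Set.Iic √(n:ℝ)
    · rw [Set.indicator_of_mem hm]
      exact auxF_bound n u hu hm
    · rw [Set.indicator_of_notMem hm, norm_zero]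
      positivity
  · filter_upwards [MeasureTheory.ae_restrict_mem measurableSet_Ioi] with u hu
    refine (auxF_tendsto u hu).congr' ?_
    filter_upwards [tendsto_sqrt_nat.eventually_ge_atTop u] with n hn
    rw [Set.indicator_of_mem (by exact hn)]

lemma lower_eq (n : ℕ) (hn : 0 < n) :
    lowerIncGamma n n = √n * ((n:ℝ) ^ n * Real.exp (-n)) * ∫ u in (0:ℝ)..√n, auxF n u := by
  have hs : 0 < √(n:ℝ) := by positivity
  have hsq := Real.mul_self_sqrt (Nat.cast_nonneg (α := ℝ) n)
  have h := intervalIntegral.integral_comp_sub_mul (a := 0) (b := √(n:ℝ))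
    (fun t : ℝ => t ^ n * Real.exp (-t)) hs.ne' (n:ℝ)
  rw [hsq, sub_self, mul_zero, sub_zero] at h
  have h2 : ∀ u : ℝ, ((n:ℝ) - √n * u) ^ n * Real.exp (-(n - √n * u))
      = ((n:ℝ) ^ n * Real.exp (-n)) * auxF n u := by
    intro u
    have : (n:ℝ) - √n * u = n * (1 - u / √n) := by
      have : (n:ℝ) * (u / √n) = √n * u := by
        field_simp
        rw [sq, hsq, mul_comm]
      rw [mul_sub, this, mul_one]
    rw [neg_sub, sub_eq_neg_add (√(n:ℝ) * u), Real.exp_add, this, mul_pow, auxF]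
    ring
  simp_rw [h2] at h
  rw [intervalIntegral.integral_const_mul, smul_eq_mul] at h
  rw [lowerIncGamma, mul_assoc, h, mul_inv_cancel_left₀ hs.ne']

lemma stirling_aux :
    Filter.Tendsto (fun n : ℕ => √(n:ℝ) * ((n:ℝ) ^ n * Real.exp (-n)) / n.factorial)
      Filter.atTop (𝓝 (√2 * √π)⁻¹) := by
  have h := (Stirling.tendsto_stirlingSeq_sqrt_pi.const_mul √2).inv₀ (by positivity)
  refine h.congr fun n => ?_
  rw [Stirling.stirlingSeq, Real.sqrt_mul (by norm_num), div_pow, Real.exp_neg,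
    ← Real.exp_nat_mul, mul_one]
  have := Real.sqrt_pos.2 (show (0:ℝ) < 2 by norm_num)
  field_simp

lemma tail_bound (n : ℕ) (hn : 0 < n) :
    |lowerIncGamma n (n + 1) - lowerIncGamma n n| ≤ (n:ℝ) ^ n * Real.exp (-n) := by
  have hc : Continuous (fun t : ℝ => t ^ n * Real.exp (-t)) := by fun_prop
  have hn' : (0:ℝ) < n := by exact_mod_cast hn
  unfold lowerIncGamma
  rw [intervalIntegral.integral_interval_sub_left (hc.intervalIntegrable _ _)
    (hc.intervalIntegrable _ _)]
  have := intervalIntegral.norm_integral_le_of_norm_le_const (a := (n:ℝ)) (b := n + 1)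
    (f := fun t : ℝ => t ^ n * Real.exp (-t)) (C := (n:ℝ) ^ n * Real.exp (-n)) ?_
  · simpa using this
  intro t ht
  rw [Set.uIoc_of_le (by linarith)] at ht
  have ht0 : 0 < t := hn'.trans ht.1
  rw [Real.norm_of_nonneg (by positivity)]
  have h1 : t / n ≤ Real.exp (t / n - 1) := by
    have := Real.add_one_le_exp (t / n - 1); linarith
  have h2 : (t / n) ^ n ≤ Real.exp (t / n - 1) ^ n := pow_le_pow_left₀ (by positivity) h1 n
  have h3 : (n:ℝ) * (t / n - 1) = t - n := by field_simp
  rw [← Real.exp_nat_mul, h3, div_pow, div_le_iff₀ (by positivity)] at h2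
  calc t ^ n * Real.exp (-t) ≤ Real.exp (t - n) * n ^ n * Real.exp (-t) := by gcongr
    _ = (n:ℝ) ^ n * (Real.exp (t - n) * Real.exp (-t)) := by ring
    _ = _ := by rw [← Real.exp_add]; congr 2; ring

/-- `γ(n+1, n+1)/n! → 1/2` as `n → ∞`. -/
theorem lowerIncGamma_central_limit :
    Filter.Tendsto (fun n : ℕ => lowerIncGamma n (n + 1) / n.factorial)
      Filter.atTop (𝓝 (1 / 2)) := by
  have h1 : Filter.Tendsto (fun n : ℕ => lowerIncGamma n n / n.factorial)
      Filter.atTop (𝓝 (1 / 2)) := by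
    have h := stirling_aux.mul auxF_integral_tendsto
    have he : (√2 * √π)⁻¹ * (√(π / (1 / 2)) / 2) = 1 / 2 := by
      rw [← Real.sqrt_mul (by norm_num), show π / (1 / 2) = 2 * π by ring]
      have : 0 < √(2 * π) := by positivity
      field_simp
    rw [he] at h
    refine h.congr' ?_
    filter_upwards [Filter.eventually_gt_atTop 0] with n hn
    rw [lower_eq n hn]
    ring
  have h2 : Filter.Tendsto
      (fun n : ℕ => (lowerIncGamma n (n + 1) - lowerIncGamma n n) / n.factorial)
      Filter.atTop (𝓝 0) := by
    have h := stirling_aux.mul (tendsto_inv_atTop_zero.comp tendsto_sqrt_nat)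
    rw [mul_zero] at h
    refine squeeze_zero_norm' ?_ h
    filter_upwards [Filter.eventually_gt_atTop 0] with n hn
    have hs : 0 < √(n:ℝ) := by positivity
    rw [norm_div, Real.norm_natCast, Real.norm_eq_abs]
    have h3 : √(n:ℝ) * ((n:ℝ) ^ n * Real.exp (-n)) / n.factorial *
        ((fun x : ℝ => x⁻¹) ∘ fun n : ℕ => √(n:ℝ)) n
        = ((n:ℝ) ^ n * Real.exp (-n)) / n.factorial := by
      simp only [Function.comp]
      field_simp
    refine le_trans ?_ h3.ge
    gcongr
    exact tail_bound n hn
  have h := h1.add h2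
  rw [add_zero] at h
  refine h.congr fun n => ?_
  ring
end

section
/- For every real r ≥ 0, the series Σ_{n=0}^∞ r^n / γ(n+1, n+1) converges (is summable). -/
open scoped Real

/-- For every `r ≥ 0`, the series `Σ_n r^n / γ(n+1, n+1)` is summable. -/
theorem summable_pow_div_lowerIncGamma (r : ℝ) (hr : 0 ≤ r) :
    Summable (fun n : ℕ => r ^ n / lowerIncGamma n (n + 1)) := by
  have key : ∀ n : ℕ, (n.factorial : ℝ) * Real.exp (-(n + 1)) ≤ lowerIncGamma n (n + 1) := by
    intro n
    have h1 : ∫ t in (0:ℝ)..((n:ℝ) + 1), t ^ n * Real.exp (-((n:ℝ) + 1))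
        = ((n:ℝ) + 1) ^ n * Real.exp (-((n:ℝ) + 1)) := by
      rw [intervalIntegral.integral_mul_const, integral_pow]
      have : (n:ℝ) + 1 ≠ 0 := by positivity
      congr 1
      rw [zero_pow (Nat.succ_ne_zero n), sub_zero, pow_succ]
      field_simp
    have h2 : ∫ t in (0:ℝ)..((n:ℝ) + 1), t ^ n * Real.exp (-((n:ℝ) + 1))
        ≤ lowerIncGamma n (n + 1) := by
      unfold lowerIncGamma
      apply intervalIntegral.integral_mono_on (by positivity)
      · exact Continuous.intervalIntegrable (by fun_prop) _ _
      · exact Continuous.intervalIntegrable (by fun_prop) _ _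
      · intro t ht
        exact mul_le_mul_of_nonneg_left (Real.exp_le_exp.mpr (by linarith [ht.2]))
          (pow_nonneg ht.1 n)
    rw [h1] at h2
    refine le_trans ?_ h2
    gcongr
    have h3 : n.factorial ≤ (n + 1) ^ n :=
      (Nat.factorial_le_pow n).trans (Nat.pow_le_pow_left (Nat.le_succ n) n)
    exact_mod_cast h3
  have hpos : ∀ n : ℕ, 0 < (n.factorial : ℝ) * Real.exp (-((n:ℝ) + 1)) := fun n => by positivity
  refine Summable.of_nonneg_of_le (fun n => ?_) (fun n => ?_)
    ((Real.summable_pow_div_factorial (r * Real.exp 1)).mul_left (Real.exp 1))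
  · exact div_nonneg (pow_nonneg hr n) ((hpos n).le.trans (key n))
  · refine (div_le_div_of_nonneg_left (pow_nonneg hr n) (hpos n) (key n)).trans (le_of_eq ?_)
    rw [Real.exp_neg, Real.exp_add, mul_pow, ← Real.exp_nat_mul, mul_one]
    field_simp
end
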